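/- Let a = (1/2)√(3/π) and α ∈ ℝ \ {0}. For ω ∈ H¹(S²) with ⟨ω, Y₀⁰⟩ = 0 and ⟨ω, Y₁^m⟩ = 0 for m = ±1, define Lω = aα(1 + 2Δ⁻¹)∂_φω, where Δ⁻¹ inverts the Laplace–Beltrami operator on mean-zero functions. Then ‖∂_φω‖_{L²(S²)} ≤ (3/(2a|α|))·‖Lω‖_{L²(S²)}. -/

import Mathlib

open MeasureTheory
open scoped ENNReal

noncomputable section

/-- Functions on the unit sphere, represented in colatitude-longitude coordinates `(θ, φ)`. -/
abbrev SphereFun : Type := ℝ → ℝ → ℝ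

/-- The `L²` inner product on the sphere:
`⟨u,v⟩ = ∫₀^{2π} ∫₀^π u v sin θ dθ dφ`. -/
def sInner (u v : SphereFun) : ℝ :=
  ∫ φ in (0:ℝ)..(2*Real.pi), ∫ θ in (0:ℝ)..Real.pi, u θ φ * v θ φ * Real.sin θ

/-- Legendre polynomials via Rodrigues' formula. -/
def legP (n : ℕ) (s : ℝ) : ℝ :=
  (1 / ((2:ℝ)^n * (Nat.factorial n : ℝ))) * iteratedDeriv n (fun x : ℝ => (x^2 - 1)^n) s

/-- Associated Legendre functions `P_n^m`. -/
def assocLegP (n m : ℕ) (s : ℝ) : ℝ :=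
  (-1 : ℝ)^m * (1 - s^2) ^ ((m : ℝ)/2) * iteratedDeriv m (legP n) s

/-- Real spherical harmonics `Y_n^m`. -/
def Ynm (n : ℕ) (m : ℤ) : SphereFun := fun θ φ =>
  if m = 0 then
    Real.sqrt ((2*(n:ℝ)+1)/(4*Real.pi)) * legP n (Real.cos θ)
  else if 0 < m then
    (-1 : ℝ)^(m.natAbs) * Real.sqrt 2 *
      Real.sqrt ((2*(n:ℝ)+1)/(4*Real.pi) *
        ((Nat.factorial (n - m.natAbs) : ℝ) / (Nat.factorial (n + m.natAbs) : ℝ))) *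
      assocLegP n m.natAbs (Real.cos θ) * Real.cos ((m.natAbs : ℝ) * φ)
  else
    (-1 : ℝ)^(m.natAbs) * Real.sqrt 2 *
      Real.sqrt ((2*(n:ℝ)+1)/(4*Real.pi) *
        ((Nat.factorial (n - m.natAbs) : ℝ) / (Nat.factorial (n + m.natAbs) : ℝ))) *
      assocLegP n m.natAbs (Real.cos θ) * Real.sin ((m.natAbs : ℝ) * φ)

/-- The spherical-harmonic coefficient `u_n^m = ⟨u, Y_n^m⟩`. -/
def coeff (u : SphereFun) (n : ℕ) (m : ℤ) : ℝ := sInner u (Ynm n m)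

/-- `μ_n = n(n+1) + 1`. -/
def muSp (n : ℕ) : ℝ := (n:ℝ)*((n:ℝ)+1)+1

/-- Squared (inhomogeneous) Sobolev norm `‖u‖²_{H^k} = Σ μ_n^k |u_n^m|²`. -/
def sobNormSq (k : ℕ) (u : SphereFun) : ℝ≥0∞ :=
  ∑' p : ℕ × ℤ, if |p.2| ≤ (p.1 : ℤ) then
    ENNReal.ofReal ((muSp p.1)^k * (coeff u p.1 p.2)^2) else 0

/-- Squared homogeneous Sobolev norm `‖u‖²_{Ḣ^k} = Σ_{n ≥ 1} λ_n^k |u_n^m|²`. -/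
def dotNormSq (k : ℕ) (u : SphereFun) : ℝ≥0∞ :=
  ∑' p : ℕ × ℤ, if 1 ≤ p.1 ∧ |p.2| ≤ (p.1 : ℤ) then
    ENNReal.ofReal (((p.1:ℝ)*((p.1:ℝ)+1))^k * (coeff u p.1 p.2)^2) else 0

/-- Squared Gevrey norm `‖u‖²_{G_λ} = Σ_{n ≥ 1} μ_n² e^{2λ√μ_n} |u_n^m|²`. -/
def gevNormSq (lam : ℝ) (u : SphereFun) : ℝ≥0∞ :=
  ∑' p : ℕ × ℤ, if 1 ≤ p.1 ∧ |p.2| ≤ (p.1 : ℤ) then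
    ENNReal.ofReal ((muSp p.1)^2 * Real.exp (2*lam*Real.sqrt (muSp p.1)) *
      (coeff u p.1 p.2)^2) else 0

/-- `∂_θ`. -/
def dTheta (u : SphereFun) : SphereFun := fun θ φ => deriv (fun t => u t φ) θ

/-- `∂_φ`. -/
def dPhi (u : SphereFun) : SphereFun := fun θ φ => deriv (fun p => u θ p) φ

/-- The Laplace–Beltrami operator in colatitude-longitude coordinates:
`Δu = (1/sinθ)∂_θ(sinθ ∂_θu) + (1/sin²θ)∂²_φu`. -/
def lapS (u : SphereFun) : SphereFun := fun θ φ =>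
  (1 / Real.sin θ) * deriv (fun t => Real.sin t * dTheta u t φ) θ
  + (1 / (Real.sin θ)^2) * dPhi (dPhi u) θ φ

/-- A zonal function: one depending only on the colatitude `θ`. -/
def Zonal (u : SphereFun) : Prop := ∀ (θ φ₁ φ₂ : ℝ), u θ φ₁ = u θ φ₂

/-- Zonal on the coordinate chart `θ ∈ [0, π]`. -/
def ZonalOn (u : SphereFun) : Prop :=
  ∀ θ ∈ Set.Icc (0:ℝ) Real.pi, ∀ (φ₁ φ₂ : ℝ), u θ φ₁ = u θ φ₂

/-- `2π`-periodicity in the longitude. -/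
def PeriodicPhi (u : SphereFun) : Prop := ∀ θ φ, u θ (φ + 2*Real.pi) = u θ φ

/-- The advection term `U·∇f` for the velocity `U = ∇⊥Ψ`, i.e.
`(1/sinθ)∂_φΨ ∂_θf − ∂_θΨ (1/sinθ)∂_φf`. -/
def advect (Ψ f : SphereFun) : SphereFun := fun θ φ =>
  (1 / Real.sin θ) * dPhi Ψ θ φ * dTheta f θ φ
  - dTheta Ψ θ φ * ((1 / Real.sin θ) * dPhi f θ φ)

/-- Smoothness in the coordinates. -/
def SphSmooth (u : SphereFun) : Prop := ContDiff ℝ (⊤ : ℕ∞) (Function.uncurry u)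

/-- A function is trivial if it is a zonal function plus an element of
`span{Y₂^m : |m| ≤ 2}`; non-triviality is the negation of this. -/
def SphNontrivial (u : SphereFun) : Prop :=
  ¬ ∃ (z : SphereFun) (c : ℤ → ℝ), Zonal z ∧
      ∀ θ ∈ Set.Icc (0:ℝ) Real.pi, ∀ φ : ℝ,
        u θ φ = z θ φ + ∑ m ∈ Finset.Icc (-2 : ℤ) 2, c m * Ynm 2 m θ φ

/-- Real analyticity on the sphere, characterized by membership in a Gevrey class. -/
def RealAnalyticSphere (u : SphereFun) : Prop := ∃ lam > 0, gevNormSq lam u < ⊤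

/-- The `L²` norm. -/
def l2Norm (u : SphereFun) : ℝ := Real.sqrt (sInner u u)

/-- The inverse Laplace–Beltrami operator `Δ⁻¹` on mean-zero functions, defined
through the spherical harmonics expansion. -/
def invLap (u : SphereFun) : SphereFun := fun θ φ =>
  ∑' p : ℕ × ℤ, if 1 ≤ p.1 ∧ |p.2| ≤ (p.1 : ℤ) then
    (-(1:ℝ)/((p.1:ℝ)*((p.1:ℝ)+1))) * coeff u p.1 p.2 * Ynm p.1 p.2 θ φ else 0


section PolyPart
open Polynomial

def pW : ℝ[X] := X ^ 2 - 1

def pint (p : ℝ[X]) : ℝ := ∫ s in (-1:ℝ)..1, p.eval s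

lemma pint_add (p q : ℝ[X]) : pint (p + q) = pint p + pint q := by
  simp only [pint, eval_add]
  exact intervalIntegral.integral_add (p.continuous.intervalIntegrable _ _)
    (q.continuous.intervalIntegrable _ _)

lemma pint_C_mul (c : ℝ) (q : ℝ[X]) : pint (C c * q) = c * pint q := by
  simp only [pint, eval_mul, eval_C]
  exact intervalIntegral.integral_const_mul _ _

lemma pW_eval_one : pW.eval 1 = 0 := by simp [pW]
lemma pW_eval_neg_one : pW.eval (-1) = 0 := by simp [pW]

lemma pint_ibp1 (A B : ℝ[X]) (h : pW ∣ A) :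
    pint (derivative A * B) = - pint (A * derivative B) := by
  obtain ⟨Q, rfl⟩ := h
  have := intervalIntegral.integral_mul_deriv_eq_deriv_mul (a := -1) (b := 1)
    (u := fun s => B.eval s) (v := fun s => (pW * Q).eval s)
    (u' := fun s => (derivative B).eval s) (v' := fun s => (derivative (pW * Q)).eval s)
    (fun x _ => B.hasDerivAt x) (fun x _ => (pW * Q).hasDerivAt x)
    ((derivative B).continuous.intervalIntegrable _ _)
    ((derivative (pW * Q)).continuous.intervalIntegrable _ _)
  simp only [eval_mul, pW_eval_one, pW_eval_neg_one] at this
  simp only [pint, eval_mul]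
  rw [show (fun s => eval s (derivative (pW * Q)) * eval s B)
    = fun s => eval s B * eval s (derivative (pW * Q)) from funext fun s => mul_comm _ _, this]
  simp [mul_comm]

lemma pint_ibp (k : ℕ) : ∀ (A B : ℝ[X]) (_ : pW ^ k ∣ A),
    pint (derivative^[k] A * B) = (-1) ^ k * pint (A * derivative^[k] B) := by
  induction k with
  | zero => intro A B _; simp
  | succ k ih =>
    intro A B h
    have h1 : pW ∣ derivative^[k] A := by
      have := pow_sub_dvd_iterate_derivative_of_pow_dvd k h
      simpa using this
    have h2 : pW ^ k ∣ A := (pow_dvd_pow _ (Nat.le_succ k)).trans h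
    rw [Function.iterate_succ_apply', pint_ibp1 _ _ h1, ih _ _ h2, ← Function.iterate_succ_apply]
    ring

lemma pint_pW_succ (n : ℕ) : (2 * n + 3 : ℝ) * pint (pW ^ (n + 1)) = - (2 * (n + 1)) * pint (pW ^ n) := by
  have h := pint_ibp1 (pW ^ (n + 1)) X (dvd_pow_self _ (Nat.succ_ne_zero n))
  have e1 : derivative (pW ^ (n + 1)) * X = C (2 * (n + 1) : ℝ) * (pW ^ (n + 1) + pW ^ n) := by
    rw [derivative_pow_succ]
    simp only [pW, derivative_sub, derivative_X_pow, derivative_one]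
    simp
    ring
  rw [e1, pint_C_mul, pint_add] at h
  simp only [derivative_X, mul_one] at h
  linarith

lemma pint_pW_pow (n : ℕ) :
    pint (pW ^ n) * ((2 * n + 1).factorial : ℝ) = (-1) ^ n * 2 ^ (2 * n + 1) * (n.factorial : ℝ) ^ 2 := by
  induction n with
  | zero => simp [pint]; norm_num
  | succ n ih =>
    have h := pint_pW_succ n
    rw [show 2 * (n + 1) + 1 = (2 * n + 1) + 1 + 1 by ring, Nat.factorial_succ, Nat.factorial_succ,
      Nat.factorial_succ n]
    push_cast
    have : pint (pW ^ (n + 1)) * ((2 * n + 2 + 1) * ((2 * n + 1 + 1) * ((2 * n + 1).factorial : ℝ)))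
       = ((2 * n + 3 : ℝ) * pint (pW ^ (n + 1))) * (2 * n + 2) * ((2 * n + 1).factorial : ℝ) := by ring
    rw [this, h]
    calc _ = -(2 * (n + 1)) * (2 * n + 2) * (pint (pW ^ n) * ((2 * n + 1).factorial : ℝ)) := by ring
      _ = _ := by rw [ih]; ring

lemma pW_monic : pW.Monic := by unfold pW; monicity!
lemma pW_natDegree : pW.natDegree = 2 := by unfold pW; compute_degree!

def pU (n m : ℕ) : ℝ[X] := derivative^[m] (derivative^[n] (pW ^ n))

lemma pU_natDegree (n m : ℕ) : (pU n m).natDegree ≤ n - m := by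
  unfold pU
  refine (natDegree_iterate_derivative _ _).trans ?_
  have := natDegree_iterate_derivative (pW ^ n) n
  have h2 : (pW ^ n).natDegree = n * 2 := by rw [pW_monic.natDegree_pow, pW_natDegree]
  omega

lemma pU_coeff (n m : ℕ) (h : m ≤ n) :
    (pU n m).coeff (n - m) * ((n - m).factorial : ℝ) = ((2 * n).factorial : ℝ) := by
  unfold pU
  rw [← Function.iterate_add_apply, coeff_iterate_derivative]
  have h1 : n - m + (m + n) = n * 2 := by omega
  have h2 : (pW ^ n).coeff (n * 2) = 1 := by
    have := (pW_monic.pow n).coeff_natDegree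
    rwa [pW_monic.natDegree_pow, pW_natDegree] at this
  rw [h1, h2]
  have := Nat.factorial_mul_descFactorial (show m + n ≤ n * 2 by omega)
  rw [show n * 2 - (m + n) = n - m by omega] at this
  rw [show 2 * n = n * 2 by ring, ← this]
  simp
  ring

lemma pint_reduce (n k m : ℕ) :
    pint (pW ^ m * pU k m * pU n m)
      = (-1) ^ (m + n) * pint (pW ^ n * derivative^[n] (derivative^[m] (pW ^ m * pU k m))) := by
  have h1 := pint_ibp m (pW ^ m * pU k m) (derivative^[n] (pW ^ n)) (dvd_mul_right _ _)
  have h2 := pint_ibp n (pW ^ n) (derivative^[m] (pW ^ m * pU k m)) dvd_rfl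
  have h3 : ((-1 : ℝ) ^ m) * (-1) ^ m = 1 := by rw [← mul_pow]; simp
  rw [pow_add, mul_assoc ((-1 : ℝ) ^ m), ← h2, mul_comm (derivative^[n] (pW ^ n)), h1, ← mul_assoc, h3, one_mul]
  rfl

lemma pint_orth_lt (n k m : ℕ) (hm : m ≤ k) (h : k < n) : pint (pW ^ m * pU k m * pU n m) = 0 := by
  rw [pint_reduce, ← Function.iterate_add_apply, iterate_derivative_eq_zero]
  · simp [pint]
  · refine lt_of_le_of_lt natDegree_mul_le ?_
    have h1 := pU_natDegree k m
    rw [pW_monic.natDegree_pow, pW_natDegree]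
    omega

lemma pint_orth (n k m : ℕ) (hm : m ≤ k) (hm' : m ≤ n) (h : k ≠ n) :
    pint (pW ^ m * pU k m * pU n m) = 0 := by
  rcases lt_or_gt_of_ne h with h | h
  · exact pint_orth_lt n k m hm h
  · rw [mul_right_comm]
    exact pint_orth_lt k n m hm' h

lemma pint_norm (n m : ℕ) (h : m ≤ n) :
    pint (pW ^ m * pU n m * pU n m) * ((n - m).factorial : ℝ) * (2 * n + 1)
      = (-1) ^ m * 2 * (2 ^ n * (n.factorial : ℝ)) ^ 2 * ((n + m).factorial : ℝ) := by
  have hd : (pW ^ m * pU n m).natDegree ≤ n + m := by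
    refine natDegree_mul_le.trans ?_
    have h1 := pU_natDegree n m
    rw [pW_monic.natDegree_pow, pW_natDegree]
    omega
  have hc : (pW ^ m * pU n m).coeff (n + m) = (pU n m).coeff (n - m) := by
    have := coeff_mul_add_eq_of_natDegree_le (f := pW ^ m) (g := pU n m) (df := m * 2) (dg := n - m)
      (by rw [pW_monic.natDegree_pow, pW_natDegree]) (pU_natDegree n m)
    have h2 : (pW ^ m).coeff (m * 2) = 1 := by
      have := (pW_monic.pow m).coeff_natDegree
      rwa [pW_monic.natDegree_pow, pW_natDegree] at this
    rw [h2, one_mul, show m * 2 + (n - m) = n + m by omega] at this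
    exact this
  have hD : derivative^[n] (derivative^[m] (pW ^ m * pU n m))
      = C (((n + m).factorial : ℝ) * (pU n m).coeff (n - m)) := by
    rw [← Function.iterate_add_apply]
    have h0 : (derivative^[n + m] (pW ^ m * pU n m)).natDegree ≤ 0 :=
      (natDegree_iterate_derivative _ _).trans (by omega)
    rw [eq_C_of_natDegree_le_zero h0, coeff_iterate_derivative, zero_add, hc,
      Nat.descFactorial_self]
    simp
  rw [pint_reduce, hD, mul_comm (pW ^ n), pint_C_mul]
  have h1 := pU_coeff n m h
  have h2 := pint_pW_pow n
  rw [Nat.factorial_succ] at h2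
  push_cast at h2
  have h4 : ((2 * n).factorial : ℝ) ≠ 0 := by positivity
  have h5 : ((-1 : ℝ) ^ n) * (-1) ^ n = 1 := by rw [← mul_pow]; simp
  calc _ = (-1) ^ (m + n) * ((n + m).factorial : ℝ) *
        ((pU n m).coeff (n - m) * ((n - m).factorial : ℝ)) * (pint (pW ^ n) * (2 * n + 1)) := by ring
    _ = (-1) ^ (m + n) * ((n + m).factorial : ℝ) *
        (pint (pW ^ n) * ((2 * n + 1) * ((2 * n).factorial : ℝ))) := by rw [h1]; ring
    _ = _ := by
      rw [h2, pow_add]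
      linear_combination ((-1) ^ m * ((n + m).factorial : ℝ) * 2 ^ (2 * n + 1) * (n.factorial : ℝ) ^ 2) * h5

lemma iteratedDeriv_poly (k : ℕ) (p : ℝ[X]) :
    iteratedDeriv k (fun x => p.eval x) = fun x => (derivative^[k] p).eval x := by
  induction k with
  | zero => simp
  | succ k ih =>
    rw [iteratedDeriv_succ, ih, Function.iterate_succ_apply']
    funext x
    exact (derivative^[k] p).deriv

lemma legP_eq (n : ℕ) : legP n = fun s =>
    (C (1 / ((2:ℝ)^n * (Nat.factorial n : ℝ))) * pU n 0).eval s := by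
  funext s
  have : (fun x : ℝ => (x^2 - 1)^n) = fun x => (pW ^ n).eval x := by
    funext x; simp [pW]
  rw [legP, this, iteratedDeriv_poly]
  simp [pU]

lemma assocLegP_eq (n m : ℕ) (s : ℝ) : assocLegP n m s =
    (-1 : ℝ)^m * (1 - s^2) ^ ((m : ℝ)/2) * ((1 / ((2:ℝ)^n * (Nat.factorial n : ℝ))) * (pU n m).eval s) := by
  rw [assocLegP, legP_eq, iteratedDeriv_poly, iterate_derivative_C_mul]
  simp [pU]

lemma rpow_half_sq (x : ℝ) (hx : 0 ≤ x) (m : ℕ) : x ^ ((m : ℝ)/2) * x ^ ((m : ℝ)/2) = x ^ m := by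
  rw [← Real.rpow_natCast x m, ← sq, ← Real.rpow_natCast, ← Real.rpow_mul hx]
  norm_num

/-- theta integrals -/
lemma theta_int (n k m : ℕ) :
    ∫ θ in (0:ℝ)..Real.pi, assocLegP n m (Real.cos θ) * assocLegP k m (Real.cos θ) * Real.sin θ
     = (-1) ^ m * ((1 / ((2:ℝ)^n * (Nat.factorial n : ℝ))) * (1 / ((2:ℝ)^k * (Nat.factorial k : ℝ)))) *
      pint (pW ^ m * pU k m * pU n m) := by
  have h := intervalIntegral.integral_comp_mul_deriv (a := 0) (b := Real.pi)
    (f := Real.cos) (f' := fun x => - Real.sin x) (g := fun s => (pW ^ m * pU k m * pU n m).eval s)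
    (fun x _ => Real.hasDerivAt_cos x) (by fun_prop) (pW ^ m * pU k m * pU n m).continuous
  have hp : pint (pW ^ m * pU k m * pU n m) = ∫ θ in (0:ℝ)..Real.pi,
      (pW ^ m * pU k m * pU n m).eval (Real.cos θ) * Real.sin θ := by
    rw [Real.cos_zero, Real.cos_pi, intervalIntegral.integral_symm (-1) 1] at h
    simp only [mul_neg, intervalIntegral.integral_neg, Function.comp] at h
    unfold pint
    linarith
  rw [hp, ← intervalIntegral.integral_const_mul]
  congr 1
  funext θ
  rw [assocLegP_eq, assocLegP_eq]
  have h1 := rpow_half_sq (1 - Real.cos θ ^ 2) (by nlinarith [Real.cos_sq_le_one θ]) m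
  have h2 : (pW.eval (Real.cos θ)) ^ m = (-1) ^ m * (1 - Real.cos θ ^ 2) ^ m := by
    rw [← mul_pow]; congr 1; simp [pW]
  have h5 : ((-1 : ℝ) ^ m) * (-1) ^ m = 1 := by rw [← mul_pow]; simp
  simp only [eval_mul, eval_pow, h2]
  rw [← h1]
  generalize (1 - Real.cos θ ^ 2) ^ ((m : ℝ)/2) = R
  have h6 : ((-1 : ℝ) ^ m) ^ 2 = 1 := by rw [sq, h5]
  ring_nf

end PolyPart

section TrigPart

def trg (m : ℤ) (φ : ℝ) : ℝ := if 0 ≤ m then Real.cos ((m : ℝ) * φ) else Real.sin (-(m : ℝ) * φ)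

def nrm (n : ℕ) (m : ℤ) : ℝ := if m = 0 then Real.sqrt ((2*(n:ℝ)+1)/(4*Real.pi)) else
  (-1 : ℝ)^(m.natAbs) * Real.sqrt 2 *
      Real.sqrt ((2*(n:ℝ)+1)/(4*Real.pi) *
        ((Nat.factorial (n - m.natAbs) : ℝ) / (Nat.factorial (n + m.natAbs) : ℝ)))

lemma Ynm_eq (n : ℕ) (m : ℤ) (θ φ : ℝ) :
    Ynm n m θ φ = nrm n m * assocLegP n m.natAbs (Real.cos θ) * trg m φ := by
  unfold Ynm nrm trg
  rcases lt_trichotomy m 0 with h | h | h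
  · have h1 : ((m.natAbs : ℕ) : ℝ) = -(m : ℝ) := by
      rw [Nat.cast_natAbs, abs_of_neg h]; push_cast; rfl
    simp [h.ne, h.not_gt, h.not_ge, h1]
  · subst h; simp [assocLegP]
  · have h1 : ((m.natAbs : ℕ) : ℝ) = (m : ℝ) := by
      rw [Nat.cast_natAbs, abs_of_pos h]
    simp [h.ne', h, h.le, h1]

lemma int_cos_int (k : ℤ) : ∫ φ in (0:ℝ)..(2*Real.pi), Real.cos ((k:ℝ) * φ)
    = if k = 0 then 2 * Real.pi else 0 := by
  split_ifs with h
  · subst h; simp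
  · have hk : (k : ℝ) ≠ 0 := by exact_mod_cast h
    rw [intervalIntegral.integral_comp_mul_left (fun x => Real.cos x) hk, integral_cos]
    have := Real.sin_int_mul_pi (2 * k)
    push_cast at this
    rw [show (k:ℝ) * (2 * Real.pi) = 2 * k * Real.pi by ring, this]
    simp

lemma int_sin_int (k : ℤ) : ∫ φ in (0:ℝ)..(2*Real.pi), Real.sin ((k:ℝ) * φ) = 0 := by
  by_cases h : k = 0
  · subst h; simp
  · have hk : (k : ℝ) ≠ 0 := by exact_mod_cast h
    rw [intervalIntegral.integral_comp_mul_left (fun x => Real.sin x) hk, integral_sin,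
      Real.cos_int_mul_two_pi]
    simp

lemma trg_cont (m : ℤ) : Continuous (trg m) := by
  unfold trg; split_ifs <;> fun_prop

lemma int_trg (m k : ℤ) : ∫ φ in (0:ℝ)..(2*Real.pi), trg m φ * trg k φ
    = if m = k then (if m = 0 then 2 * Real.pi else Real.pi) else 0 := by
  have hc (j : ℤ) : IntervalIntegrable (fun φ => Real.cos ((j:ℝ) * φ)) volume 0 (2*Real.pi) :=
    Continuous.intervalIntegrable (by fun_prop) _ _
  have hs (j : ℤ) : IntervalIntegrable (fun φ => Real.sin ((j:ℝ) * φ)) volume 0 (2*Real.pi) :=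
    Continuous.intervalIntegrable (by fun_prop) _ _
  by_cases hm : 0 ≤ m <;> by_cases hk : 0 ≤ k
  · have : (fun φ => trg m φ * trg k φ)
        = fun φ => (Real.cos (((m - k : ℤ):ℝ) * φ) + Real.cos (((m + k : ℤ):ℝ) * φ)) * (1/2) := by
      funext φ
      simp only [trg, hm, hk, if_true]
      push_cast
      rw [sub_mul _ _ φ, add_mul _ _ φ, Real.cos_sub, Real.cos_add]; ring
    rw [this, intervalIntegral.integral_mul_const, intervalIntegral.integral_add (hc _) (hc _),
      int_cos_int, int_cos_int]
    split_ifs <;> first | omega | (ring)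
  · have : (fun φ => trg m φ * trg k φ)
        = fun φ => (Real.sin (((m - k : ℤ):ℝ) * φ) - Real.sin (((m + k : ℤ):ℝ) * φ)) * (1/2) := by
      funext φ
      simp only [trg, hm, hk, if_true, if_false]
      push_cast
      rw [sub_mul _ _ φ, add_mul _ _ φ, Real.sin_sub, Real.sin_add, neg_mul, Real.sin_neg]; ring
    rw [this, intervalIntegral.integral_mul_const, intervalIntegral.integral_sub (hs _) (hs _),
      int_sin_int, int_sin_int]
    split_ifs <;> first | omega | (ring)
  · have : (fun φ => trg m φ * trg k φ)
        = fun φ => (Real.sin (((k - m : ℤ):ℝ) * φ) - Real.sin (((m + k : ℤ):ℝ) * φ)) * (1/2) := by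
      funext φ
      simp only [trg, hm, hk, if_true, if_false]
      push_cast
      rw [sub_mul _ _ φ, add_mul _ _ φ, Real.sin_sub, Real.sin_add, neg_mul, Real.sin_neg]; ring
    rw [this, intervalIntegral.integral_mul_const, intervalIntegral.integral_sub (hs _) (hs _),
      int_sin_int, int_sin_int]
    split_ifs <;> first | omega | (ring)
  · have : (fun φ => trg m φ * trg k φ)
        = fun φ => (Real.cos (((m - k : ℤ):ℝ) * φ) - Real.cos (((m + k : ℤ):ℝ) * φ)) * (1/2) := by
      funext φ
      simp only [trg, hm, hk, if_false]
      push_cast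
      rw [sub_mul _ _ φ, add_mul _ _ φ, Real.cos_sub, Real.cos_add, neg_mul, neg_mul, Real.sin_neg, Real.sin_neg]; ring
    rw [this, intervalIntegral.integral_mul_const, intervalIntegral.integral_sub (hc _) (hc _),
      int_cos_int, int_cos_int]
    split_ifs <;> first | omega | (ring)

lemma sInner_Ynm (n k : ℕ) (m l : ℤ) : sInner (Ynm n m) (Ynm k l) = nrm n m * nrm k l *
    (∫ φ in (0:ℝ)..(2*Real.pi), trg m φ * trg l φ) *
    ∫ θ in (0:ℝ)..Real.pi, assocLegP n m.natAbs (Real.cos θ) * assocLegP k l.natAbs (Real.cos θ) * Real.sin θ := by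
  unfold sInner
  rw [← intervalIntegral.integral_const_mul (nrm n m * nrm k l), ← intervalIntegral.integral_mul_const]
  congr 1
  funext φ
  rw [← intervalIntegral.integral_const_mul]
  congr 1
  funext θ
  rw [Ynm_eq, Ynm_eq]
  ring

lemma sInner_Ynm_self (n : ℕ) (m : ℤ) (hm : |m| ≤ (n : ℤ)) : sInner (Ynm n m) (Ynm n m) = 1 := by
  rw [sInner_Ynm, theta_int, int_trg]
  have hm' : m.natAbs ≤ n := by rw [Int.abs_eq_natAbs] at hm; omega
  have h := pint_norm n m.natAbs hm'
  have hpi := Real.pi_pos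
  have h1 : ((n - m.natAbs).factorial : ℝ) ≠ 0 := by positivity
  have h2 : (2 * n + 1 : ℝ) ≠ 0 := by positivity
  have h3 : pint (pW ^ m.natAbs * pU n m.natAbs * pU n m.natAbs)
      = (-1) ^ m.natAbs * 2 * (2 ^ n * (n.factorial : ℝ)) ^ 2 * ((n + m.natAbs).factorial : ℝ)
        / (((n - m.natAbs).factorial : ℝ) * (2 * n + 1)) := by
    rw [eq_div_iff (by positivity), ← h]; ring
  have h5 : ((-1 : ℝ) ^ m.natAbs) * (-1) ^ m.natAbs = 1 := by rw [← mul_pow]; simp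
  have h6 : (-1 : ℝ) ^ m.natAbs = 1 ∨ (-1 : ℝ) ^ m.natAbs = -1 := neg_one_pow_eq_or ℝ _
  rw [h3]
  by_cases h0 : m = 0
  · subst h0
    have hn : nrm n 0 * nrm n 0 = (2*(n:ℝ)+1)/(4*Real.pi) := by
      simp only [nrm, if_true]
      exact Real.mul_self_sqrt (by positivity)
    rw [hn]
    simp
    field_simp
    norm_num
  · have hn : nrm n m * nrm n m = 2 * ((2*(n:ℝ)+1)/(4*Real.pi) *
        ((Nat.factorial (n - m.natAbs) : ℝ) / (Nat.factorial (n + m.natAbs) : ℝ))) := by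
      simp only [nrm, h0, if_false]
      have e1 := Real.mul_self_sqrt (show (0:ℝ) ≤ 2 by norm_num)
      have e2 := Real.mul_self_sqrt (show 0 ≤ (2*(n:ℝ)+1)/(4*Real.pi) *
        ((Nat.factorial (n - m.natAbs) : ℝ) / (Nat.factorial (n + m.natAbs) : ℝ)) by positivity)
      rw [mul_mul_mul_comm, e2, mul_mul_mul_comm ((-1 : ℝ) ^ m.natAbs) (√2), h5, e1, one_mul]
    rw [hn]
    simp only [h0, if_true, if_false]
    rcases h6 with h6 | h6 <;> rw [h6] <;> field_simp <;> norm_num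

lemma sInner_Ynm_ne (n k : ℕ) (m l : ℤ) (hm : |m| ≤ (n : ℤ)) (hl : |l| ≤ (k : ℤ))
    (h : (n, m) ≠ (k, l)) : sInner (Ynm n m) (Ynm k l) = 0 := by
  rw [sInner_Ynm, int_trg]
  by_cases hml : m = l
  · subst hml
    have hnk : k ≠ n := by rintro rfl; exact h rfl
    rw [Int.abs_eq_natAbs] at hm hl
    rw [theta_int, pint_orth n k m.natAbs (by omega) (by omega) hnk]
    simp
  · simp [hml]

lemma assocLegP_cont (n m : ℕ) : Continuous (assocLegP n m) := by
  have : assocLegP n m = fun s => (-1 : ℝ)^m * (1 - s^2) ^ ((m : ℝ)/2) *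
    ((1 / ((2:ℝ)^n * (Nat.factorial n : ℝ))) * (pU n m).eval s) := funext fun s => assocLegP_eq n m s
  rw [this]
  have h : Continuous fun s : ℝ => (1 - s^2) ^ ((m : ℝ)/2) :=
    Continuous.rpow_const (by fun_prop) (fun s => Or.inr (by positivity))
  have h2 := (pU n m).continuous
  fun_prop

lemma Ynm_cont (n : ℕ) (m : ℤ) : Continuous (Function.uncurry (Ynm n m)) := by
  have : Function.uncurry (Ynm n m) = fun z : ℝ × ℝ =>
      nrm n m * assocLegP n m.natAbs (Real.cos z.1) * trg m z.2 := by
    funext z; exact Ynm_eq n m z.1 z.2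
  rw [this]
  have h1 := assocLegP_cont n m.natAbs
  have h2 := trg_cont m
  fun_prop

end TrigPart

section HilbPart
open MeasureTheory Set

lemma hilb {E I : Type*} [NormedAddCommGroup E] [InnerProductSpace ℝ E] [CompleteSpace E]
    (e : I → E) (he : Orthonormal ℝ e) (F : E) (lam b : I → ℝ)
    (hb : ∀ p, b p = -1 / lam p * inner ℝ (e p) F)
    (hlam : ∀ p, inner ℝ (e p) F = 0 ∨ 6 ≤ lam p)
    (hs : Summable fun p => b p • e p) :
    4 / 9 * ‖F‖ ^ 2 ≤ ‖F + (2:ℝ) • ∑' p, b p • e p‖ ^ 2 := by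
  set T := ∑' p, b p • e p with hT
  have hsum : HasSum (fun p => b p • e p) T := hs.hasSum
  have hTe (p : I) : inner ℝ (e p) T = b p := by
    have h1 : HasSum (fun q => inner ℝ (e p) (b q • e q)) (inner ℝ (e p) T) := by
      simpa [inner_smul_right] using hsum.mapL (innerSL ℝ (e p))
    have h2 : HasSum (fun q => inner ℝ (e p) (b q • e q)) (b p) := by
      have := hasSum_single (f := fun q => inner ℝ (e p) (b q • e q)) p (fun q hq => by
        rw [inner_smul_right, he.inner_eq_zero hq.symm, mul_zero])
      simpa [inner_smul_right, he.norm_eq_one] using this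
    exact h1.unique h2
  have hFT : HasSum (fun q => b q * inner ℝ (e q) F) (inner ℝ F T) := by
    have := hsum.mapL (innerSL ℝ F)
    simpa [inner_smul_right, real_inner_comm] using this
  have hTT : HasSum (fun q => b q * b q) (‖T‖ ^ 2) := by
    have := hsum.mapL (innerSL ℝ T)
    simpa [inner_smul_right, real_inner_comm, hTe] using this
  have hB := he.tsum_inner_products_le F
  have hBs := he.inner_products_summable F
  have hnorm : ‖F + (2:ℝ) • T‖ ^ 2 = ‖F‖ ^ 2 + 4 * inner ℝ F T + 4 * ‖T‖ ^ 2 := by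
    rw [norm_add_sq_real, inner_smul_right, norm_smul]
    norm_num
    ring
  have h3 := (hFT.mul_left 4).add (hTT.mul_left 4)
  have h4 := (hBs.hasSum).mul_left (-(5/9 : ℝ))
  have h5 := hasSum_le (fun p => by
    show -(5/9 : ℝ) * ‖inner ℝ (e p) F‖ ^ 2 ≤ 4 * (b p * inner ℝ (e p) F) + 4 * (b p * b p)
    rw [hb p, Real.norm_eq_abs, sq_abs]
    rcases hlam p with h | h
    · rw [h]; simp
    · have hi : 0 < lam p := by linarith
      generalize inner ℝ (e p) F = c
      have hi2 : (lam p)⁻¹ ≤ 1/6 := by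
        rw [one_div]; exact inv_anti₀ (by norm_num) h
      have hi3 : 0 < (lam p)⁻¹ := inv_pos.mpr hi
      rw [neg_div, one_div]
      generalize (lam p)⁻¹ = x at *
      nlinarith [mul_nonneg (sq_nonneg c) (mul_nonneg (sub_nonneg.mpr hi2) (show 0 ≤ 5/6 - x by linarith))]) h4 h3
  rw [hnorm]
  linarith

lemma summable_lam : Summable fun p : {p : ℕ × ℤ // 1 ≤ p.1 ∧ |p.2| ≤ (p.1 : ℤ)} =>
    (1 / ((p.1.1:ℝ) * ((p.1.1:ℝ) + 1))) ^ 2 := by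
  have h1 : Summable fun n : ℕ => 1 / (n : ℝ) ^ 2 := Real.summable_one_div_nat_pow.mpr (by norm_num)
  have h2 : Summable fun n : ℕ => 1 / ((n : ℝ) + 1) ^ 2 := by
    have := (summable_nat_add_iff 1).mpr h1
    simpa using this
  have h3 : Summable fun m : ℤ => 1 / (|(m : ℝ)| + 1) ^ 2 := by
    apply Summable.of_nat_of_neg <;> simpa using h2
  have h4 := (h1.mul_of_nonneg h3 (fun n => by positivity) (fun m => by positivity)).comp_injective
    (Subtype.val_injective (p := fun p : ℕ × ℤ => 1 ≤ p.1 ∧ |p.2| ≤ (p.1 : ℤ)))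
  refine Summable.of_nonneg_of_le (fun p => by positivity) ?_ h4
  rintro ⟨⟨n, m⟩, hn, hm⟩
  simp only [Function.comp] at hn hm ⊢
  have hm' : |(m : ℝ)| ≤ n := by exact_mod_cast hm
  have hn' : (1 : ℝ) ≤ n := by exact_mod_cast hn
  rw [div_pow, one_pow, mul_pow, one_div_mul_one_div]
  gcongr

def nuS : Measure (ℝ × ℝ) :=
  (volume.restrict (Ioc (0:ℝ) (2*Real.pi))).prod (volume.restrict (Ioc (0:ℝ) Real.pi))

instance : IsFiniteMeasure nuS := by unfold nuS; infer_instance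

def hatS (u : SphereFun) : ℝ × ℝ → ℝ := fun z => u z.2 z.1 * Real.sqrt (Real.sin z.2)

lemma nuS_ae : ∀ᵐ z ∂nuS, z ∈ Icc (0:ℝ) (2*Real.pi) ×ˢ Icc (0:ℝ) Real.pi := by
  have : nuS = volume.restrict (Ioc (0:ℝ) (2*Real.pi) ×ˢ Ioc (0:ℝ) Real.pi) := by
    unfold nuS; rw [Measure.prod_restrict]; rfl
  rw [this]
  filter_upwards [ae_restrict_mem (measurableSet_Ioc.prod measurableSet_Ioc)] with z hz
  exact ⟨Ioc_subset_Icc_self hz.1, Ioc_subset_Icc_self hz.2⟩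

lemma hatS_memLp (u : SphereFun) (hu : Continuous (Function.uncurry u)) : MemLp (hatS u) 2 nuS := by
  have hc : Continuous (hatS u) := by
    unfold hatS
    have : Continuous fun z : ℝ × ℝ => u z.2 z.1 := hu.comp (by fun_prop : Continuous fun z : ℝ × ℝ => (z.2, z.1))
    fun_prop
  obtain ⟨C, hC⟩ := (isCompact_Icc.prod isCompact_Icc :
    IsCompact (Icc (0:ℝ) (2*Real.pi) ×ˢ Icc (0:ℝ) Real.pi)).exists_bound_of_continuousOn hc.continuousOn
  refine MemLp.of_bound hc.aestronglyMeasurable C ?_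
  filter_upwards [nuS_ae] with z hz using hC z hz

lemma sInner_eq (u v : SphereFun) (hu : MemLp (hatS u) 2 nuS) (hv : MemLp (hatS v) 2 nuS) :
    sInner u v = inner ℝ (hu.toLp (hatS u)) (hv.toLp (hatS v)) := by
  have h1 : Integrable (fun z => hatS u z * hatS v z) nuS := hu.integrable_mul hv
  have h2 : (fun z : ℝ × ℝ => u z.2 z.1 * v z.2 z.1 * Real.sin z.2) =ᵐ[nuS]
      fun z => hatS u z * hatS v z := by
    filter_upwards [nuS_ae] with z hz
    have := Real.mul_self_sqrt (Real.sin_nonneg_of_mem_Icc hz.2)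
    simp only [hatS]
    rw [mul_mul_mul_comm, this]
  have h3 := h1.congr h2.symm
  rw [L2.inner_def]
  have h4 : ∫ z, inner ℝ (hu.toLp (hatS u) z) (hv.toLp (hatS v) z) ∂nuS = ∫ z, hatS u z * hatS v z ∂nuS := by
    apply integral_congr_ae
    filter_upwards [hu.coeFn_toLp, hv.coeFn_toLp] with z e1 e2
    rw [e1, e2]; simp [mul_comm]
  rw [h4, ← integral_congr_ae h2]
  unfold nuS at h3 ⊢
  rw [integral_prod _ h3]
  unfold sInner
  rw [intervalIntegral.integral_of_le (by positivity)]
  congr 1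
  funext φ
  rw [intervalIntegral.integral_of_le (by positivity)]

end HilbPart

section FinalPart
open MeasureTheory Set

lemma trg_hasDeriv (m : ℤ) (φ : ℝ) : HasDerivAt (trg m) (-(m : ℝ) * trg (-m) φ) φ := by
  rcases lt_trichotomy m 0 with h | h | h
  · have e : trg m = fun x => Real.sin (-(m : ℝ) * x) := by
      funext x; simp [trg, h.not_ge]
    have e2 : trg (-m) φ = Real.cos (-(m : ℝ) * φ) := by
      simp [trg, h.le]
    rw [e, e2]
    have := ((hasDerivAt_id φ).const_mul (-(m : ℝ))).sin
    simp only [id] at this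
    convert this using 1
    ring
  · subst h
    have e : trg 0 = fun x => 1 := by funext x; simp [trg]
    rw [e]; simpa using hasDerivAt_const φ (1:ℝ)
  · have e : trg m = fun x => Real.cos ((m : ℝ) * x) := by
      funext x; simp [trg, h.le]
    have e2 : trg (-m) φ = Real.sin ((m : ℝ) * φ) := by
      simp [trg, h]
    rw [e, e2]
    have := ((hasDerivAt_id φ).const_mul (m : ℝ)).cos
    simp only [id] at this
    convert this using 1
    ring

lemma trg_two_pi (m : ℤ) : trg m (2 * Real.pi) = trg m 0 := by
  unfold trg
  split_ifs
  · rw [Real.cos_int_mul_two_pi]; simp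
  · have := Real.sin_int_mul_pi (-m * 2)
    push_cast at this
    rw [show -(m:ℝ) * (2 * Real.pi) = -m * 2 * Real.pi by ring, this]; simp

lemma nrm_neg (n : ℕ) (m : ℤ) : nrm n (-m) = nrm n m := by simp [nrm]

variable {ω : SphereFun}

lemma om_deriv (hsm : SphSmooth ω) (θ φ : ℝ) : HasDerivAt (fun p => ω θ p) (dPhi ω θ φ) φ := by
  have hd : Differentiable ℝ (Function.uncurry ω) := hsm.differentiable (by simp)
  have : DifferentiableAt ℝ (fun p => Function.uncurry ω (θ, p)) φ :=
    (hd (θ, φ)).comp φ (by fun_prop)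
  exact this.hasDerivAt

lemma dPhi_cont (hsm : SphSmooth ω) : Continuous (Function.uncurry (dPhi ω)) := by
  have hd : Differentiable ℝ (Function.uncurry ω) := hsm.differentiable (by simp)
  have e : Function.uncurry (dPhi ω) = fun z => fderiv ℝ (Function.uncurry ω) z (0, 1) := by
    funext z
    have h1 : HasDerivAt (fun p : ℝ => (z.1, p)) ((0:ℝ), (1:ℝ)) z.2 :=
      (hasDerivAt_const z.2 z.1).prodMk (hasDerivAt_id z.2)
    have h2 := (hd z).hasFDerivAt.comp_hasDerivAt z.2 h1
    exact (om_deriv hsm z.1 z.2).unique h2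
  rw [e]
  exact (hsm.continuous_fderiv (by simp)).clm_apply continuous_const

lemma sInner_swap (u v : SphereFun) (hu : Continuous (Function.uncurry u))
    (hv : Continuous (Function.uncurry v)) : sInner u v =
    ∫ θ in (0:ℝ)..Real.pi, ∫ φ in (0:ℝ)..(2*Real.pi), u θ φ * v θ φ * Real.sin θ := by
  have h := sInner_eq u v (hatS_memLp u hu) (hatS_memLp v hv)
  unfold sInner
  have hc : Continuous (Function.uncurry fun φ θ : ℝ => u θ φ * v θ φ * Real.sin θ) := by
    have h1 : Continuous fun z : ℝ × ℝ => u z.2 z.1 :=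
      hu.comp (by fun_prop : Continuous fun z : ℝ × ℝ => (z.2, z.1))
    have h2 : Continuous fun z : ℝ × ℝ => v z.2 z.1 :=
      hv.comp (by fun_prop : Continuous fun z : ℝ × ℝ => (z.2, z.1))
    unfold Function.uncurry
    fun_prop
  have hi : Integrable (Function.uncurry fun φ θ : ℝ => u θ φ * v θ φ * Real.sin θ)
      ((volume.restrict (Ioc (0:ℝ) (2*Real.pi))).prod (volume.restrict (Ioc (0:ℝ) Real.pi))) := by
    rw [Measure.prod_restrict]
    exact (hc.continuousOn.integrableOn_compact (isCompact_Icc.prod isCompact_Icc)).mono_set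
      (prod_mono Ioc_subset_Icc_self Ioc_subset_Icc_self)
  have := integral_integral_swap hi
  simp only [intervalIntegral.integral_of_le (show (0:ℝ) ≤ 2 * Real.pi by positivity),
    intervalIntegral.integral_of_le (show (0:ℝ) ≤ Real.pi by positivity)]
  exact this

lemma coeff_dPhi (hsm : SphSmooth ω) (hper : PeriodicPhi ω) (n : ℕ) (m : ℤ) :
    coeff (dPhi ω) n m = m * coeff ω n (-m) := by
  have hcω : Continuous (Function.uncurry ω) := hsm.continuous
  unfold coeff
  rw [sInner_swap _ _ (dPhi_cont hsm) (Ynm_cont n m), sInner_swap _ _ hcω (Ynm_cont n (-m)),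
    ← intervalIntegral.integral_const_mul]
  congr 1
  funext θ
  have hd : Continuous fun φ => dPhi ω θ φ :=
    (dPhi_cont hsm).comp (by fun_prop : Continuous fun φ : ℝ => (θ, φ))
  have ibp := intervalIntegral.integral_mul_deriv_eq_deriv_mul (a := 0) (b := 2 * Real.pi)
    (u := trg m) (v := fun p => ω θ p) (u' := fun φ => -(m:ℝ) * trg (-m) φ)
    (v' := fun φ => dPhi ω θ φ) (fun x _ => trg_hasDeriv m x) (fun x _ => om_deriv hsm θ x)
    ((continuous_const.mul (trg_cont (-m))).intervalIntegrable _ _) (hd.intervalIntegrable _ _)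
  have hp : ω θ (2 * Real.pi) = ω θ 0 := by simpa using hper θ 0
  rw [trg_two_pi, hp, sub_self, zero_sub] at ibp
  have e1 : (fun φ => dPhi ω θ φ * Ynm n m θ φ * Real.sin θ) = fun φ =>
      (nrm n m * assocLegP n m.natAbs (Real.cos θ) * Real.sin θ) * (trg m φ * dPhi ω θ φ) := by
    funext φ; rw [Ynm_eq]; ring
  have e2 : (fun φ => ω θ φ * Ynm n (-m) θ φ * Real.sin θ) = fun φ =>
      (nrm n m * assocLegP n m.natAbs (Real.cos θ) * Real.sin θ) * (trg (-m) φ * ω θ φ) := by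
    funext φ; rw [Ynm_eq, nrm_neg, Int.natAbs_neg]; ring
  rw [e1, e2, intervalIntegral.integral_const_mul, intervalIntegral.integral_const_mul, ibp]
  simp only [mul_assoc, intervalIntegral.integral_const_mul, neg_mul, intervalIntegral.integral_neg]
  ring

abbrev idxS := {p : ℕ × ℤ // 1 ≤ p.1 ∧ |p.2| ≤ (p.1 : ℤ)}

def eS (p : idxS) : Lp ℝ 2 nuS := (hatS_memLp _ (Ynm_cont p.1.1 p.1.2)).toLp (hatS (Ynm p.1.1 p.1.2))

lemma eS_orthonormal : Orthonormal ℝ eS := by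
  classical
  rw [orthonormal_iff_ite]
  intro p q
  unfold eS
  rw [← sInner_eq]
  split_ifs with h
  · subst h; exact sInner_Ynm_self _ _ p.2.2
  · exact sInner_Ynm_ne _ _ _ _ p.2.2 q.2.2 (fun hh => h (Subtype.ext hh))

lemma main_bound (f : SphereFun) (hf : Continuous (Function.uncurry f))
    (h1 : ∀ m : ℤ, |m| ≤ 1 → coeff f 1 m = 0) :
    4 / 9 * sInner f f ≤ sInner (fun θ φ => f θ φ + 2 * invLap f θ φ)
      (fun θ φ => f θ φ + 2 * invLap f θ φ) := by
  have hF := hatS_memLp f hf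
  set F : Lp ℝ 2 nuS := hF.toLp (hatS f) with hFdef
  have hc (p : idxS) : inner ℝ (eS p) F = coeff f p.1.1 p.1.2 := by
    rw [real_inner_comm, coeff, sInner_eq _ _ hF (hatS_memLp _ (Ynm_cont _ _))]
    rfl
  set lam : idxS → ℝ := fun p => (p.1.1 : ℝ) * ((p.1.1 : ℝ) + 1) with hlam
  set b : idxS → ℝ := fun p => -1 / lam p * inner ℝ (eS p) F with hb
  have hbs : Summable fun p => |b p| := by
    have s1 := (summable_lam.add (eS_orthonormal.inner_products_summable F))
    refine Summable.of_nonneg_of_le (fun p => abs_nonneg _) (fun p => ?_) s1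
    simp only [hb, hlam, abs_mul, Real.norm_eq_abs]
    have : |-1 / ((p.1.1 : ℝ) * ((p.1.1 : ℝ) + 1))| = 1 / ((p.1.1 : ℝ) * ((p.1.1 : ℝ) + 1)) := by
      rw [neg_div, abs_neg, abs_of_nonneg (by positivity)]
    rw [this]
    nlinarith [sq_nonneg (1 / ((p.1.1 : ℝ) * ((p.1.1 : ℝ) + 1)) - |inner ℝ (eS p) F|),
      sq_nonneg (1 / ((p.1.1 : ℝ) * ((p.1.1 : ℝ) + 1))), sq_nonneg (|inner ℝ (eS p) F|)]
  have hns : Summable fun p => ‖b p • eS p‖ := by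
    simpa [norm_smul, eS_orthonormal.norm_eq_one] using hbs
  have hsum : Summable fun p => b p • eS p := hns.of_norm
  have hH := hilb eS eS_orthonormal F lam b (fun p => rfl) (fun p => by
    rcases Nat.lt_or_ge p.1.1 2 with h | h
    · left
      have hp1 : p.1.1 = 1 := by have := p.2.1; omega
      have hp2 := p.2.2
      rw [hc, hp1]
      rw [hp1] at hp2
      exact h1 _ (by simpa using hp2)
    · right
      have : (2:ℝ) ≤ p.1.1 := by exact_mod_cast h
      simp only [hlam]
      nlinarith) hsum
  have hT : (∑' p, b p • eS p : Lp ℝ 2 nuS) =ᵐ[nuS] fun z => ∑' p, (b p • eS p : Lp ℝ 2 nuS) z :=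
    Lp.coeFn_tsum (tsum_enorm_ne_top_iff_summable_norm.mpr hns)
  set g : SphereFun := fun θ φ => f θ φ + 2 * invLap f θ φ with hg
  have hae : hatS g =ᵐ[nuS] (F + (2:ℝ) • ∑' p, b p • eS p : Lp ℝ 2 nuS) := by
    have he : ∀ᵐ z ∂nuS, ∀ p, (b p • eS p : Lp ℝ 2 nuS) z = b p * hatS (Ynm p.1.1 p.1.2) z := by
      rw [ae_all_iff]
      intro p
      filter_upwards [Lp.coeFn_smul (b p) (eS p),
        (hatS_memLp _ (Ynm_cont p.1.1 p.1.2)).coeFn_toLp] with z e1 e2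
      rw [e1, Pi.smul_apply, smul_eq_mul, ← e2]; rfl
    filter_upwards [hT, he, Lp.coeFn_add F ((2:ℝ) • ∑' p, b p • eS p),
      Lp.coeFn_smul (2:ℝ) (∑' p, b p • eS p : Lp ℝ 2 nuS), hF.coeFn_toLp] with z e1 e2 e3 e4 e5
    rw [e3, Pi.add_apply, e4, Pi.smul_apply, e1, e5]
    simp only [e2, hatS, hg, smul_eq_mul, invLap]
    rw [add_mul, mul_assoc, ← tsum_mul_right]
    congr 2
    rw [← tsum_subtype_eq_of_support_subset (s := {p : ℕ × ℤ | 1 ≤ p.1 ∧ |p.2| ≤ (p.1 : ℤ)})]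
    · apply tsum_congr
      intro p
      have hp := p.2
      simp only [mem_setOf_eq] at hp
      rw [if_pos hp]
      simp only [hb, hlam]
      rw [hc]
      ring
    · intro p hp
      by_contra h
      simp only [mem_setOf_eq] at h
      exact hp (by simp only [if_neg h, zero_mul])
  have hgm : MemLp (hatS g) 2 nuS := (memLp_congr_ae hae).mpr (Lp.memLp _)
  have hG : hgm.toLp (hatS g) = F + (2:ℝ) • ∑' p, b p • eS p := by
    rw [← Lp.toLp_coeFn (F + (2:ℝ) • ∑' p, b p • eS p : Lp ℝ 2 nuS) (Lp.memLp _)]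
    exact (MemLp.toLp_eq_toLp_iff _ _).mpr hae
  rw [sInner_eq g g hgm hgm, sInner_eq f f hF hF, hG, real_inner_self_eq_norm_sq,
    real_inner_self_eq_norm_sq]
  exact hH

end FinalPart

/-- Coercivity of the linearization `Lω = aα(1 + 2Δ⁻¹)∂_φω`
of the non-rotating Euler equations around the rigid rotation `αY₁⁰`, on the
orthogonal complement of `span{Y₁¹, Y₁⁻¹}`:
`‖∂_φω‖_{L²} ≤ (3/(2a|α|))‖Lω‖_{L²}`. -/
theorem coercivity_rigid_rotation (a α : ℝ)
    (ha : a = (1/2) * Real.sqrt (3/Real.pi)) (hα : α ≠ 0)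
    (ω : SphereFun) (hsm : SphSmooth ω) (hper : PeriodicPhi ω)
    (hH1 : sobNormSq 1 ω < ⊤)
    (hmean : coeff ω 0 0 = 0)
    (horth1 : coeff ω 1 1 = 0) (horth2 : coeff ω 1 (-1) = 0) :
    l2Norm (dPhi ω)
      ≤ (3/(2*a*|α|)) * l2Norm (fun θ φ =>
          a*α * (dPhi ω θ φ + 2 * invLap (dPhi ω) θ φ)) := by
  have hapos : 0 < a := by rw [ha]; have := Real.pi_pos; positivity
  have hα' : 0 < |α| := abs_pos.mpr hα
  have hb := main_bound (dPhi ω) (dPhi_cont hsm) (fun m hm => by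
    rw [coeff_dPhi hsm hper]
    have h := abs_le.mp hm
    obtain rfl | rfl | rfl : m = -1 ∨ m = 0 ∨ m = 1 := by omega
    · simp [horth1]
    · simp
    · simp [horth2])
  set g : SphereFun := fun θ φ => dPhi ω θ φ + 2 * invLap (dPhi ω) θ φ with hg
  have hs : sInner (fun θ φ => a*α * (dPhi ω θ φ + 2 * invLap (dPhi ω) θ φ))
      (fun θ φ => a*α * (dPhi ω θ φ + 2 * invLap (dPhi ω) θ φ)) = (a * α) ^ 2 * sInner g g := by
    unfold sInner
    rw [← intervalIntegral.integral_const_mul]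
    congr 1
    funext φ
    rw [← intervalIntegral.integral_const_mul]
    congr 1
    funext θ
    simp only [hg]
    ring
  unfold l2Norm
  rw [hs, Real.sqrt_mul (sq_nonneg _), Real.sqrt_sq_eq_abs, abs_mul, abs_of_pos hapos]
  have e : 3 / (2 * a * |α|) * (a * |α| * √(sInner g g)) = 3 / 2 * √(sInner g g) := by
    field_simp
  rw [e]
  have e2 : (3 / 2 : ℝ) = √(9 / 4) := by
    rw [show (9 / 4 : ℝ) = (3 / 2) ^ 2 by norm_num, Real.sqrt_sq (by norm_num)]
  rw [e2, ← Real.sqrt_mul (by norm_num)]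
  apply Real.sqrt_le_sqrt
  linarith
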